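/- Let r ≥ 2 and let H be an r-regular 3-partite 3-graph with n vertices in each vertex class. If H does not contain a copy of (r/2)·F, where F is the truncated Fano plane, then ν(H) ≥ (1 + 1/(22r − 77/3))·n/2. -/

import Mathlib

namespace Tripartite

/-- The degree of a vertex `a` in the first class of a 3-partite 3-multihypergraph,
whose edges are given as a multiset of triples (so parallel edges are allowed). -/
def deg1 {α β γ : Type*} [DecidableEq α] (H : Multiset (α × β × γ)) (a : α) : ℕ :=
  (H.filter fun e => e.1 = a).card

/-- The degree of a vertex `b` in the second class. -/
def deg2 {α β γ : Type*} [DecidableEq β] (H : Multiset (α × β × γ)) (b : β) : ℕ :=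
  (H.filter fun e => e.2.1 = b).card

/-- The degree of a vertex `c` in the third class. -/
def deg3 {α β γ : Type*} [DecidableEq γ] (H : Multiset (α × β × γ)) (c : γ) : ℕ :=
  (H.filter fun e => e.2.2 = c).card

/-- `H` is `r`-regular: every vertex of every class has degree exactly `r`. -/
def IsRegular {α β γ : Type*} [DecidableEq α] [DecidableEq β] [DecidableEq γ]
    (H : Multiset (α × β × γ)) (r : ℕ) : Prop :=
  (∀ a, deg1 H a = r) ∧ (∀ b, deg2 H b = r) ∧ (∀ c, deg3 H c = r)

/-- A matching of `H`: a set of edges of `H` that are pairwise disjoint. -/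
def IsMatching {α β γ : Type*} (H : Multiset (α × β × γ)) (M : Finset (α × β × γ)) : Prop :=
  (∀ e ∈ M, e ∈ H) ∧
  ∀ e ∈ M, ∀ f ∈ M, e ≠ f → e.1 ≠ f.1 ∧ e.2.1 ≠ f.2.1 ∧ e.2.2 ≠ f.2.2

/-- The matching number ν(H): the maximum size of a matching of `H`. -/
noncomputable def matchNum {α β γ : Type*} (H : Multiset (α × β × γ)) : ℕ :=
  sSup {k | ∃ M : Finset (α × β × γ), IsMatching H M ∧ M.card = k}

/-- The edge multiset of the truncated Fano plane `F` on vertices `x1, y1` (first class),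
`x2, y2` (second class), `x3, y3` (third class). -/
def fanoEdges {α β γ : Type*} (x1 y1 : α) (x2 y2 : β) (x3 y3 : γ) :
    Multiset (α × β × γ) :=
  {(x1, x2, x3), (x1, y2, y3), (y1, x2, y3), (y1, y2, x3)}

/-- The six vertices `x1, y1, x2, y2, x3, y3` span a copy of `s • F` in `H`, i.e. a
subhypergraph in which every edge of the truncated Fano plane appears with
multiplicity (at least) `s`. -/
def IsFanoCopy {α β γ : Type*} (H : Multiset (α × β × γ)) (s : ℕ)
    (x1 y1 : α) (x2 y2 : β) (x3 y3 : γ) : Prop :=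
  x1 ≠ y1 ∧ x2 ≠ y2 ∧ x3 ≠ y3 ∧ s • fanoEdges x1 y1 x2 y2 x3 y3 ≤ H

/-- The six vertices `x1, y1, x2, y2, x3, y3` span a connected component of `H` that is a
copy of `s • F`: the multiset of edges of `H` meeting one of these six vertices is exactly
`s` parallel copies of each of the four edges of the truncated Fano plane. -/
def IsFanoComponent {α β γ : Type*} [DecidableEq α] [DecidableEq β] [DecidableEq γ]
    (H : Multiset (α × β × γ)) (s : ℕ)
    (x1 y1 : α) (x2 y2 : β) (x3 y3 : γ) : Prop :=
  x1 ≠ y1 ∧ x2 ≠ y2 ∧ x3 ≠ y3 ∧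
  H.filter (fun e => e.1 = x1 ∨ e.1 = y1 ∨ e.2.1 = x2 ∨ e.2.1 = y2 ∨
      e.2.2 = x3 ∨ e.2.2 = y3)
    = s • fanoEdges x1 y1 x2 y2 x3 y3

/-- The patterns of the edges of the truncated Fano plane: in class `i` the pattern `s` selects the
vertex `y i` when `s i = true` and `x i` otherwise. -/
def IsEvenPattern (s : Fin 3 → Bool) : Prop :=
  xor (s 0) (xor (s 1) (s 2)) = false

instance : DecidablePred IsEvenPattern := fun _ => inferInstanceAs (Decidable (_ = _))

lemma IsEvenPattern.update_not :
    ∀ (s : Fin 3 → Bool) (i : Fin 3), ¬ IsEvenPattern s →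
      IsEvenPattern (Function.update s i (!s i)) := by
  decide

lemma IsEvenPattern.compl :
    ∀ s : Fin 3 → Bool, ¬ IsEvenPattern s → IsEvenPattern fun i => !s i := by
  decide

lemma IsEvenPattern.eq_false_or :
    ∀ s : Fin 3 → Bool, IsEvenPattern s →
      (∀ i, s i = false) ∨ ∃ i, s i = false ∧ ∀ j, j ≠ i → s j = true := by
  decide

/-- Choosing an allowed vertex in each class, with a free choice in at least one class, one can
reach an edge of the truncated Fano plane. -/
lemma exists_isEvenPattern (P : Fin 3 → Bool → Prop) (h : ∀ i, ∃ b, P i b)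
    (h' : ∃ i, ∀ b, P i b) : ∃ s, IsEvenPattern s ∧ ∀ i, P i (s i) := by
  choose s hs using h
  obtain ⟨i, hi⟩ := h'
  by_cases hp : IsEvenPattern s
  · exact ⟨s, hp, hs⟩
  · refine ⟨Function.update s i (!s i), .update_not s i hp, fun j => ?_⟩
    by_cases hj : j = i
    · subst hj; simpa using hi _
    · simpa [Function.update_of_ne hj] using hs j

lemma sum_fin_three_of_ne {i j l : Fin 3} (hij : i ≠ j) (hil : i ≠ l) (hjl : j ≠ l)
    (g : Fin 3 → ℕ) : ∑ a, g a = g i + g j + g l := by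
  have : (Finset.univ : Finset (Fin 3)) = {i, j, l} := by
    revert i j l; decide
  rw [this, Finset.sum_insert (by simp [hij, hil]), Finset.sum_insert (by simp [hjl]),
    Finset.sum_singleton, add_assoc]

lemma eq_of_ne_of_ne {i j l : Fin 3} (hij : i ≠ j) (hil : i ≠ l) (hjl : j ≠ l) (a : Fin 3) :
    a = i ∨ a = j ∨ a = l := by
  revert i j l a; decide

section Core

variable {E V : Type*} (v : E → Fin 3 → V)

/-- A family of pairwise disjoint edges. -/
def IsDisjointFamily (M : Finset E) : Prop :=
  ∀ e ∈ M, ∀ f ∈ M, e ≠ f → ∀ i, v e i ≠ v f i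

/-- The edge `f` is one of the four edges of the truncated Fano plane on the vertices `C`. -/
def IsTileEdge (C : Fin 3 → Bool → V) (f : E) : Prop :=
  ∃ s, IsEvenPattern s ∧ ∀ i, v f i = C i (s i)

/-- A packing of single edges `N` and copies `T` of the truncated Fano plane. -/
structure IsPacking (N : Finset E) (T : Finset (Fin 3 → Bool → V)) : Prop where
  disj : IsDisjointFamily v N
  inj : ∀ C ∈ T, ∀ i, C i false ≠ C i true
  edge : ∀ C ∈ T, ∀ s, IsEvenPattern s → ∃ f, ∀ i, v f i = C i (s i)
  tile_disj : ∀ C ∈ T, ∀ D ∈ T, C ≠ D → ∀ i b b', C i b ≠ D i b'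
  tile_edge_disj : ∀ C ∈ T, ∀ e ∈ N, ∀ i b, C i b ≠ v e i

/-- The vertex `x` of class `i` is not covered by the packing. -/
def IsFree (N : Finset E) (T : Finset (Fin 3 → Bool → V)) (i : Fin 3) (x : V) : Prop :=
  (∀ e ∈ N, v e i ≠ x) ∧ ∀ C ∈ T, ∀ b, C i b ≠ x

variable {v} {N : Finset E} {T : Finset (Fin 3 → Bool → V)} {k : ℕ}

/-- Replacing part of `N` by `S` and choosing one edge in each tile gives a matching. -/
lemma IsPacking.exchange [DecidableEq E] (hP : IsPacking v N T)
    (hmax : ∀ M, IsDisjointFamily v M → M.card ≤ k)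
    (S N' : Finset E) (hS : IsDisjointFamily v S) (hN' : N' ⊆ N)
    (hSN : ∀ e ∈ N', ∀ f ∈ S, ∀ i, v e i ≠ v f i)
    (hT : ∀ C ∈ T, ∃ s, IsEvenPattern s ∧ ∀ i, ∀ f ∈ S, C i (s i) ≠ v f i) :
    S.card + N'.card + T.card ≤ k := by
  have hg : ∀ C : T, ∃ e : E, (∀ i, ∃ b, v e i = C.1 i b) ∧ ∀ i, ∀ f ∈ S, v e i ≠ v f i := by
    rintro ⟨C, hC⟩
    obtain ⟨s, hs, h⟩ := hT C hC
    obtain ⟨e, he⟩ := hP.edge C hC s hs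
    exact ⟨e, fun i => ⟨_, he i⟩, fun i f hf => by rw [he]; exact h i f hf⟩
  choose g hg1 hg2 using hg
  have hgg : ∀ C D : T, C ≠ D → ∀ i, v (g C) i ≠ v (g D) i := by
    intro C D hCD i
    obtain ⟨b, hb⟩ := hg1 C i
    obtain ⟨b', hb'⟩ := hg1 D i
    rw [hb, hb']
    exact hP.tile_disj _ C.2 _ D.2 (fun h => hCD (Subtype.ext h)) i b b'
  have hgN : ∀ C : T, ∀ e ∈ N, ∀ i, v (g C) i ≠ v e i := by
    intro C e he i
    obtain ⟨b, hb⟩ := hg1 C i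
    rw [hb]
    exact hP.tile_edge_disj _ C.2 e he i b
  have hinj : Function.Injective g := fun C D h => by
    by_contra hne
    exact hgg C D hne 0 (by rw [h])
  have h1 : Disjoint S N' := Finset.disjoint_left.2 fun e h h' => hSN e h' e h 0 rfl
  have h2 : Disjoint (S ∪ N') (Finset.univ.image g) := by
    refine Finset.disjoint_left.2 fun e h h' => ?_
    obtain ⟨C, -, rfl⟩ := Finset.mem_image.1 h'
    rcases Finset.mem_union.1 h with h | h
    · exact hg2 C 0 _ h rfl
    · exact hgN C _ (hN' h) 0 rfl
  have hc : (S ∪ N' ∪ Finset.univ.image g).card = S.card + N'.card + T.card := by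
    rw [Finset.card_union_of_disjoint h2, Finset.card_union_of_disjoint h1,
      Finset.card_image_of_injective _ hinj]
    simp
  rw [← hc]
  apply hmax
  intro e he f hf hef i
  simp only [Finset.mem_union, Finset.mem_image, Finset.mem_univ, true_and] at he hf
  rcases he with (he | he) | ⟨C, rfl⟩ <;> rcases hf with (hf | hf) | ⟨D, rfl⟩
  · exact hS e he f hf hef i
  · exact (hSN f hf e he i).symm
  · exact (hg2 D i e he).symm
  · exact hSN e he f hf i
  · exact hP.disj e (hN' he) f (hN' hf) hef i
  · exact (hgN D e (hN' he) i).symm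
  · exact hg2 C i f hf
  · exact hgN C f (hN' hf) i
  · exact hgg C D (fun h => hef (by rw [h])) i

/-- In a maximum packing every edge that is not in a tile meets a single edge of the packing. -/
lemma IsPacking.exists_mem_inter (hP : IsPacking v N T)
    (hmax : ∀ M, IsDisjointFamily v M → M.card ≤ k) (hk : N.card + T.card = k)
    (f : E) (hf : ∀ C ∈ T, ¬ IsTileEdge v C f) : ∃ i, ∃ e ∈ N, v e i = v f i := by
  classical
  by_contra! hcon
  have := hP.exchange hmax {f} N (by intro e he g hg h; simp_all) subset_rfl
    (by intro e he g hg i; rw [Finset.mem_singleton.1 hg]; exact hcon i e he) (by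
      intro C hC
      simp only [Finset.mem_singleton, forall_eq]
      by_cases h : ∃ i, ∀ b, C i b ≠ v f i
      · refine exists_isEvenPattern (fun i b => C i b ≠ v f i) (fun i => ?_) h
        by_contra! h'
        exact hP.inj C hC i ((h' _).trans (h' _).symm)
      · push Not at h
        choose s hs using h
        refine ⟨fun i => !s i,
          .compl s fun h' => hf C hC ⟨s, h', fun i => (hs i).symm⟩, fun i h => ?_⟩
        rw [← hs i] at h
        have := hP.inj C hC i
        cases hsi : s i <;> simp_all)
  simp at this
  omega

/-- A single edge `e` and three free vertices that span a truncated Fano plane can be turned into a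
tile of the packing. -/
lemma IsPacking.exists_insert_tile (hP : IsPacking v N T) {e : E} (he : e ∈ N) (x : Fin 3 → V)
    (hx : ∀ i, IsFree v N T i (x i))
    (hl : ∀ i, ∃ f, v f i = v e i ∧ ∀ j, j ≠ i → v f j = x j) :
    ∃ N' T', IsPacking v N' T' ∧ N'.card + T'.card = N.card + T.card ∧ T.card < T'.card := by
  classical
  have hCN : ∀ e' ∈ N.erase e, ∀ i (b : Bool), (if b then x i else v e i) ≠ v e' i := by
    intro e' he' i b
    cases b
    · exact hP.disj e he e' (Finset.mem_of_mem_erase he') (Finset.ne_of_mem_erase he').symm i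
    · exact ((hx i).1 e' (Finset.mem_of_mem_erase he')).symm
  have hCT : ∀ D ∈ T, ∀ i (b b' : Bool), (if b then x i else v e i) ≠ D i b' := by
    intro D hD i b b'
    cases b
    · exact (hP.tile_edge_disj D hD e he i b').symm
    · exact ((hx i).2 D hD b').symm
  have hnot : (fun i b => if b then x i else v e i) ∉ T := fun h => hCT _ h 0 false false rfl
  refine ⟨N.erase e, insert (fun i b => if b then x i else v e i) T, ⟨?_, ?_, ?_, ?_, ?_⟩, ?_, ?_⟩
  · exact fun a ha b hb => hP.disj a (Finset.mem_of_mem_erase ha) b (Finset.mem_of_mem_erase hb)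
  · intro C hC i
    rcases Finset.mem_insert.1 hC with rfl | hC
    · exact (hx i).1 e he
    · exact hP.inj C hC i
  · intro C hC s hs
    rcases Finset.mem_insert.1 hC with rfl | hC
    · rcases IsEvenPattern.eq_false_or s hs with h0 | ⟨i, hi, hj⟩
      · exact ⟨e, fun i => by simp [h0 i]⟩
      · obtain ⟨f, hf, hf'⟩ := hl i
        refine ⟨f, fun a => ?_⟩
        by_cases ha : a = i
        · subst ha; simp [hi, hf]
        · simp [hj a ha, hf' a ha]
    · exact hP.edge C hC s hs
  · intro C hC D hD hCD i b b'
    rcases Finset.mem_insert.1 hC with rfl | hC <;> rcases Finset.mem_insert.1 hD with rfl | hD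
    · exact absurd rfl hCD
    · exact hCT D hD i b b'
    · exact (hCT C hC i b' b).symm
    · exact hP.tile_disj C hC D hD hCD i b b'
  · intro C hC e' he' i b
    rcases Finset.mem_insert.1 hC with rfl | hC
    · exact hCN e' he' i b
    · exact hP.tile_edge_disj C hC e' (Finset.mem_of_mem_erase he') i b
  · rw [Finset.card_insert_of_notMem hnot, Finset.card_erase_of_mem he]
    have := Finset.card_pos.2 ⟨e, he⟩
    omega
  · rw [Finset.card_insert_of_notMem hnot]
    omega

lemma not_isFree_of_mem {e : E} {i : Fin 3} (he : e ∈ N) : ¬ IsFree v N T i (v e i) :=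
  fun h => h.1 e he rfl

variable [Fintype E]

open Classical in
/-- The edges that meet the single edges of the packing only in the class `i` vertex of `e`, and that
contain a free vertex. -/
noncomputable def links (v : E → Fin 3 → V) (N : Finset E) (T : Finset (Fin 3 → Bool → V))
    (e : E) (i : Fin 3) : Finset E :=
  {f | v f i = v e i ∧ (∀ j, j ≠ i → ∀ e' ∈ N, v e' j ≠ v f j) ∧ ∃ j, IsFree v N T j (v f j)}

open Classical in
/-- The number of free vertices of an edge. -/
noncomputable def freeCount (v : E → Fin 3 → V) (N : Finset E) (T : Finset (Fin 3 → Bool → V))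
    (f : E) : ℕ :=
  ∑ i, if IsFree v N T i (v f i) then 1 else 0

lemma mem_links {e f : E} {i : Fin 3} : f ∈ links v N T e i ↔
    v f i = v e i ∧ (∀ j, j ≠ i → ∀ e' ∈ N, v e' j ≠ v f j) ∧ ∃ j, IsFree v N T j (v f j) := by
  simp [links]

lemma not_isFree_of_mem_links {e f : E} {i : Fin 3} (he : e ∈ N) (hf : f ∈ links v N T e i) :
    ¬ IsFree v N T i (v f i) := by
  rw [(mem_links.1 hf).1]; exact not_isFree_of_mem he

/-- Two edges linked to different vertices of `e` meet the third class in the same vertex or in the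
same tile. -/
lemma IsPacking.links_conflict (hP : IsPacking v N T)
    (hmax : ∀ M, IsDisjointFamily v M → M.card ≤ k) (hk : N.card + T.card = k)
    {e f g : E} (he : e ∈ N) {i j l : Fin 3} (hij : i ≠ j) (hil : i ≠ l) (hjl : j ≠ l)
    (hf : f ∈ links v N T e i) (hg : g ∈ links v N T e j) :
    v f l = v g l ∨ ∃ C ∈ T, ∃ b b', C l b = v f l ∧ C l b' = v g l := by
  classical
  by_contra! hcon
  obtain ⟨hne, hcon⟩ := hcon
  have hfF := not_isFree_of_mem_links he hf
  have hgF := not_isFree_of_mem_links he hg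
  obtain ⟨hf1, hf2, a, ha⟩ := mem_links.1 hf
  obtain ⟨hg1, hg2, c, hc⟩ := mem_links.1 hg
  have hfg : ∀ a, v f a ≠ v g a := by
    intro a
    rcases eq_of_ne_of_ne hij hil hjl a with rfl | rfl | rfl
    · rw [hf1]; exact hg2 _ hij e he
    · rw [hg1]; exact (hf2 _ hij.symm e he).symm
    · exact hne
  have hS : IsDisjointFamily v {f, g} := by
    intro x hx y hy hxy
    simp only [Finset.mem_insert, Finset.mem_singleton] at hx hy
    rcases hx with rfl | rfl <;> rcases hy with rfl | rfl
    · exact absurd rfl hxy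
    · exact hfg
    · exact fun a => (hfg a).symm
    · exact absurd rfl hxy
  have hNd : ∀ (i : Fin 3) (f : E), v f i = v e i → (∀ j, j ≠ i → ∀ e' ∈ N, v e' j ≠ v f j) →
      ∀ e' ∈ N.erase e, ∀ a, v e' a ≠ v f a := by
    intro i f h1 h2 e' he' a
    by_cases hai : a = i
    · subst hai
      rw [h1]
      exact hP.disj e' (Finset.mem_of_mem_erase he') e he (Finset.ne_of_mem_erase he') a
    · exact h2 a hai e' (Finset.mem_of_mem_erase he')
  have hex := hP.exchange hmax {f, g} (N.erase e) hS (Finset.erase_subset _ _) (by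
      intro e' he' x hx
      simp only [Finset.mem_insert, Finset.mem_singleton] at hx
      rcases hx with rfl | rfl
      · exact hNd i _ hf1 hf2 e' he'
      · exact hNd j _ hg1 hg2 e' he') (by
      intro C hC
      simp only [Finset.mem_insert, Finset.mem_singleton, forall_eq_or_imp, forall_eq]
      have hinj := hP.inj C hC
      have hfi : ∀ b, C i b ≠ v f i := fun b => by rw [hf1]; exact hP.tile_edge_disj C hC e he i b
      have hgj : ∀ b, C j b ≠ v g j := fun b => by rw [hg1]; exact hP.tile_edge_disj C hC e he j b
      have havoid : ∀ a x, ∃ b, C a b ≠ x := fun a x => by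
        by_contra! h'
        exact hinj a ((h' _).trans (h' _).symm)
      have hfree_f : (∀ b, C j b ≠ v f j) ∨ ∀ b, C l b ≠ v f l := by
        rcases eq_of_ne_of_ne hij hil hjl a with rfl | rfl | rfl
        · exact absurd ha hfF
        · exact Or.inl (ha.2 C hC)
        · exact Or.inr (ha.2 C hC)
      have hfree_g : (∀ b, C i b ≠ v g i) ∨ ∀ b, C l b ≠ v g l := by
        rcases eq_of_ne_of_ne hij hil hjl c with rfl | rfl | rfl
        · exact Or.inl (hc.2 C hC)
        · exact absurd hc hgF
        · exact Or.inr (hc.2 C hC)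
      refine exists_isEvenPattern (fun a b => C a b ≠ v f a ∧ C a b ≠ v g a) (fun a => ?_) ?_
      · rcases eq_of_ne_of_ne hij hil hjl a with rfl | rfl | rfl
        · obtain ⟨b, hb⟩ := havoid a (v g a)
          exact ⟨b, hfi b, hb⟩
        · obtain ⟨b, hb⟩ := havoid a (v f a)
          exact ⟨b, hb, hgj b⟩
        · by_cases h : ∃ b, C a b = v f a
          · obtain ⟨b, hb⟩ := h
            obtain ⟨b', hb'⟩ := havoid a (v f a)
            exact ⟨b', hb', hcon C hC b b' hb⟩
          · push Not at h
            obtain ⟨b, hb⟩ := havoid a (v g a)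
            exact ⟨b, h b, hb⟩
      · rcases hfree_f with h | h
        · exact ⟨j, fun b => ⟨h b, hgj b⟩⟩
        · rcases hfree_g with h' | h'
          · exact ⟨i, fun b => ⟨hfi b, h' b⟩⟩
          · exact ⟨l, fun b => ⟨h b, h' b⟩⟩)
  have hfg' : f ≠ g := fun h => hfg 0 (by rw [h])
  rw [Finset.card_pair hfg', Finset.card_erase_of_mem he] at hex
  have := Finset.card_pos.2 ⟨e, he⟩
  omega

/-- The links at two vertices of `e` either all run through one free vertex of the third class, or
none of them has a free vertex in the third class. -/
lemma IsPacking.links_dichotomy (hP : IsPacking v N T)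
    (hmax : ∀ M, IsDisjointFamily v M → M.card ≤ k) (hk : N.card + T.card = k)
    {e : E} (he : e ∈ N) {i j l : Fin 3} (hij : i ≠ j) (hil : i ≠ l) (hjl : j ≠ l)
    (hi : (links v N T e i).Nonempty) (hj : (links v N T e j).Nonempty) :
    (∃ x, IsFree v N T l x ∧ (∀ f ∈ links v N T e i, v f l = x) ∧
      ∀ f ∈ links v N T e j, v f l = x) ∨
    ((∀ f ∈ links v N T e i, ¬ IsFree v N T l (v f l)) ∧
      ∀ f ∈ links v N T e j, ¬ IsFree v N T l (v f l)) := by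
  obtain ⟨f₀, hf₀⟩ := hi
  obtain ⟨g₀, hg₀⟩ := hj
  have key : ∀ f ∈ links v N T e i, ∀ g ∈ links v N T e j,
      v f l = v g l ∨ (¬ IsFree v N T l (v f l) ∧ ¬ IsFree v N T l (v g l)) := by
    intro f hf g hg
    rcases hP.links_conflict hmax hk he hij hil hjl hf hg with h | ⟨C, hC, b, b', h, h'⟩
    · exact Or.inl h
    · exact Or.inr ⟨fun hF => hF.2 C hC b h, fun hF => hF.2 C hC b' h'⟩
  by_cases h₀ : IsFree v N T l (v g₀ l)
  · left
    have h1 : ∀ f ∈ links v N T e i, v f l = v g₀ l := fun f hf =>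
      (key f hf g₀ hg₀).resolve_right fun h => h.2 h₀
    refine ⟨v g₀ l, h₀, h1, fun g hg => ?_⟩
    rcases key f₀ hf₀ g hg with h | h
    · rw [← h, h1 f₀ hf₀]
    · exact absurd (by rw [h1 f₀ hf₀]; exact h₀) h.1
  · right
    have h1 : ∀ f ∈ links v N T e i, ¬ IsFree v N T l (v f l) := by
      intro f hf
      rcases key f hf g₀ hg₀ with h | h
      · rwa [h]
      · exact h.1
    refine ⟨h1, fun g hg => ?_⟩
    rcases key f₀ hf₀ g hg with h | h
    · rw [← h]; exact h1 f₀ hf₀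
    · exact h.2

end Core

section Count

variable {E V : Type*} [Fintype E] {v : E → Fin 3 → V} {N : Finset E}
  {T : Finset (Fin 3 → Bool → V)} {k r : ℕ}

lemma freeCount_le_of_mem_links {e f : E} (he : e ∈ N) {i j l : Fin 3} (hij : i ≠ j) (hil : i ≠ l)
    (hjl : j ≠ l) (hf : f ∈ links v N T e i) : freeCount v N T f ≤ 2 := by
  classical
  rw [freeCount, sum_fin_three_of_ne hij hil hjl, if_neg (not_isFree_of_mem_links he hf)]
  split_ifs <;> omega

lemma freeCount_le_one_of_mem_links {e f : E} (he : e ∈ N) {i j l : Fin 3} (hij : i ≠ j)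
    (hil : i ≠ l) (hjl : j ≠ l) (hf : f ∈ links v N T e i) (hl : ¬ IsFree v N T l (v f l)) :
    freeCount v N T f ≤ 1 := by
  classical
  rw [freeCount, sum_fin_three_of_ne hij hil hjl, if_neg (not_isFree_of_mem_links he hf),
    if_neg hl]
  split_ifs <;> omega

lemma sum_freeCount_links_le_two_mul {e : E} (he : e ∈ N) {i j l : Fin 3} (hij : i ≠ j)
    (hil : i ≠ l) (hjl : j ≠ l) :
    ∑ f ∈ links v N T e i, freeCount v N T f ≤ 2 * (links v N T e i).card := by
  rw [mul_comm]
  exact Finset.sum_le_card_nsmul _ _ _ fun f hf => freeCount_le_of_mem_links he hij hil hjl hf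

lemma sum_freeCount_links_le_card {e : E} (he : e ∈ N) {i j l : Fin 3} (hij : i ≠ j)
    (hil : i ≠ l) (hjl : j ≠ l) (h : ∀ f ∈ links v N T e i, ¬ IsFree v N T l (v f l)) :
    ∑ f ∈ links v N T e i, freeCount v N T f ≤ (links v N T e i).card := by
  simpa using Finset.sum_le_card_nsmul _ _ 1
    fun f hf => freeCount_le_one_of_mem_links he hij hil hjl hf (h f hf)

variable [DecidableEq V]

lemma card_links_le (hreg : ∀ i x, (Finset.univ.filter fun f => v f i = x).card = r) (e : E)
    (i : Fin 3) : (links v N T e i).card ≤ r := by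
  rw [← hreg i (v e i)]
  exact Finset.card_le_card fun f hf => by simpa using (mem_links.1 hf).1

lemma card_links_add_le (hreg : ∀ i x, (Finset.univ.filter fun f => v f i = x).card = r)
    {e : E} (he : e ∈ N) {i j l : Fin 3} (hij : i ≠ j) {x : V}
    (hi : ∀ f ∈ links v N T e i, v f l = x) (hj : ∀ f ∈ links v N T e j, v f l = x) :
    (links v N T e i).card + (links v N T e j).card ≤ r := by
  classical
  have hd : Disjoint (links v N T e i) (links v N T e j) := by
    refine Finset.disjoint_left.2 fun f hf hf' => ?_
    exact (mem_links.1 hf').2.1 i hij e he (mem_links.1 hf).1.symm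
  rw [← hreg l x, ← Finset.card_union_of_disjoint hd]
  refine Finset.card_le_card fun f hf => ?_
  rcases Finset.mem_union.1 hf with h | h
  · simpa using hi f h
  · simpa using hj f h

/-- The bound on free incidences when at least one vertex of `e` has no links. -/
lemma IsPacking.sum_freeCount_le_of_links_eq_empty (hP : IsPacking v N T)
    (hmax : ∀ M, IsDisjointFamily v M → M.card ≤ k) (hk : N.card + T.card = k)
    (hreg : ∀ i x, (Finset.univ.filter fun f => v f i = x).card = r)
    {e : E} (he : e ∈ N) {i j l : Fin 3} (hij : i ≠ j) (hil : i ≠ l) (hjl : j ≠ l)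
    (hl : links v N T e l = ∅) :
    ∑ a, ∑ f ∈ links v N T e a, freeCount v N T f ≤ 2 * r := by
  rw [sum_fin_three_of_ne hij hil hjl, hl, Finset.sum_empty, add_zero]
  have ci := card_links_le (N := N) (T := T) hreg e i
  have cj := card_links_le (N := N) (T := T) hreg e j
  have si := sum_freeCount_links_le_two_mul (v := v) (T := T) he hij hil hjl
  have sj := sum_freeCount_links_le_two_mul (v := v) (T := T) he hij.symm hjl hil
  rcases (links v N T e i).eq_empty_or_nonempty with h | hi
  · rw [h, Finset.sum_empty]; omega
  rcases (links v N T e j).eq_empty_or_nonempty with h | hj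
  · rw [h, Finset.sum_empty]; omega
  rcases hP.links_dichotomy hmax hk he hij hil hjl hi hj with ⟨x, -, h1, h2⟩ | ⟨h1, h2⟩
  · have := card_links_add_le hreg he hij h1 h2
    omega
  · have := sum_freeCount_links_le_card he hij hil hjl h1
    have := sum_freeCount_links_le_card he hij.symm hjl hil h2
    omega

/-- The bound on free incidences when the links at `i` and `j` have no free vertex in class `l`. -/
lemma IsPacking.sum_freeCount_le_of_not_isFree (hP : IsPacking v N T)
    (hmax : ∀ M, IsDisjointFamily v M → M.card ≤ k) (hk : N.card + T.card = k)
    (hreg : ∀ i x, (Finset.univ.filter fun f => v f i = x).card = r)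
    {e : E} (he : e ∈ N) {i j l : Fin 3} (hij : i ≠ j) (hil : i ≠ l) (hjl : j ≠ l)
    (hne : ∀ a, (links v N T e a).Nonempty)
    (h1 : ∀ f ∈ links v N T e i, ¬ IsFree v N T l (v f l))
    (h2 : ∀ f ∈ links v N T e j, ¬ IsFree v N T l (v f l)) :
    ∑ a, ∑ f ∈ links v N T e a, freeCount v N T f ≤ 2 * r := by
  have hcontra : ∀ {a b : Fin 3}, a ≠ b → a ≠ l → b ≠ l →
      (∀ f ∈ links v N T e a, ¬ IsFree v N T l (v f l)) →
      ¬ ∀ f ∈ links v N T e a, ¬ IsFree v N T b (v f b) := by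
    intro a b hab hal hbl ha hb
    obtain ⟨f, hf⟩ := hne a
    obtain ⟨c, hc⟩ := (mem_links.1 hf).2.2
    rcases eq_of_ne_of_ne hab hal hbl c with rfl | rfl | rfl
    · exact not_isFree_of_mem_links he hf hc
    · exact hb f hf hc
    · exact ha f hf hc
  rcases hP.links_dichotomy hmax hk he hil hij hjl.symm (hne i) (hne l) with
    ⟨x, -, hx, hx'⟩ | ⟨h, -⟩
  swap
  · exact absurd h (hcontra hij hil hjl h1)
  rcases hP.links_dichotomy hmax hk he hjl hij.symm hil.symm (hne j) (hne l) with
    ⟨y, -, hy, hy'⟩ | ⟨h, -⟩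
  swap
  · exact absurd h (hcontra hij.symm hjl hil h2)
  have c1 := card_links_add_le hreg he hil hx hx'
  have c2 := card_links_add_le hreg he hjl hy hy'
  have s1 := sum_freeCount_links_le_card he hij hil hjl h1
  have s2 := sum_freeCount_links_le_card he hij.symm hjl hil h2
  have s3 := sum_freeCount_links_le_two_mul (v := v) (T := T) he hil.symm hjl.symm hij
  rw [sum_fin_three_of_ne hij hil hjl]
  omega

/-- In a maximum packing with as many tiles as possible, the links of a single edge have at most
`2 * r` incidences with free vertices. -/
lemma IsPacking.sum_freeCount_le (hP : IsPacking v N T)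
    (hmax : ∀ M, IsDisjointFamily v M → M.card ≤ k) (hk : N.card + T.card = k)
    (hTmax : ∀ N' T', IsPacking v N' T' → N'.card + T'.card = k → T'.card ≤ T.card)
    (hreg : ∀ i x, (Finset.univ.filter fun f => v f i = x).card = r)
    {e : E} (he : e ∈ N) :
    ∑ a, ∑ f ∈ links v N T e a, freeCount v N T f ≤ 2 * r := by
  have d01 : (0 : Fin 3) ≠ 1 := by decide
  have d02 : (0 : Fin 3) ≠ 2 := by decide
  have d12 : (1 : Fin 3) ≠ 2 := by decide
  by_cases hne : ∀ a, (links v N T e a).Nonempty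
  swap
  · push Not at hne
    obtain ⟨a, ha⟩ := hne
    obtain ⟨i, j, hij, hia, hja⟩ : ∃ i j : Fin 3, i ≠ j ∧ i ≠ a ∧ j ≠ a := by
      clear ha
      revert a
      decide
    exact hP.sum_freeCount_le_of_links_eq_empty hmax hk hreg he hij hia hja ha
  rcases hP.links_dichotomy hmax hk he d01 d02 d12 (hne 0) (hne 1) with
    ⟨z, hz, hz0, hz1⟩ | ⟨h1, h2⟩
  swap
  · exact hP.sum_freeCount_le_of_not_isFree hmax hk hreg he d01 d02 d12 hne h1 h2
  rcases hP.links_dichotomy hmax hk he d02 d01 d12.symm (hne 0) (hne 2) with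
    ⟨y, hy, hy0, hy2⟩ | ⟨h1, h2⟩
  swap
  · exact hP.sum_freeCount_le_of_not_isFree hmax hk hreg he d02 d01 d12.symm hne h1 h2
  rcases hP.links_dichotomy hmax hk he d12 d01.symm d02.symm (hne 1) (hne 2) with
    ⟨x, hx, hx1, hx2⟩ | ⟨h1, h2⟩
  swap
  · exact hP.sum_freeCount_le_of_not_isFree hmax hk hreg he d12 d01.symm d02.symm hne h1 h2
  exfalso
  obtain ⟨f₀, hf₀⟩ := hne 0
  obtain ⟨f₁, hf₁⟩ := hne 1
  obtain ⟨f₂, hf₂⟩ := hne 2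
  obtain ⟨N', T', hP', hcard, hlt⟩ := hP.exists_insert_tile he ![x, y, z]
    (by intro i; fin_cases i <;> assumption) (by
      intro i
      fin_cases i
      · exact ⟨f₀, (mem_links.1 hf₀).1, by
          intro j hj; fin_cases j <;> simp_all⟩
      · exact ⟨f₁, (mem_links.1 hf₁).1, by
          intro j hj; fin_cases j <;> simp_all⟩
      · exact ⟨f₂, (mem_links.1 hf₂).1, by
          intro j hj; fin_cases j <;> simp_all⟩)
  have := hTmax N' T' hP' (hcard.trans hk)
  omega

end Count

lemma IsEvenPattern.eq_not : ∀ (i : Fin 3) (s t : Fin 3 → Bool), IsEvenPattern s →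
    IsEvenPattern t → s ≠ t → s i = t i → ∀ j, j ≠ i → t j = !s j := by
  decide

lemma IsEvenPattern.eq_or_eq {i : Fin 3} {s t u : Fin 3 → Bool} (hs : IsEvenPattern s)
    (ht : IsEvenPattern t) (hu : IsEvenPattern u) (hst : s ≠ t) (hi : s i = t i)
    (hui : u i = s i) : u = s ∨ u = t := by
  by_cases hus : u = s
  · exact Or.inl hus
  refine Or.inr (funext fun j => ?_)
  by_cases hj : j = i
  · rw [hj, hui, hi]
  · rw [eq_not i s u hs hu (Ne.symm hus) hui.symm j hj, eq_not i s t hs ht hst hi j hj]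

lemma IsEvenPattern.exists_triple : ∀ s : Fin 3 → Bool, IsEvenPattern s →
    ∃ t u : Fin 3 → Bool, IsEvenPattern t ∧ IsEvenPattern u ∧ s ≠ t ∧ s ≠ u ∧ t ≠ u ∧
      (∃ i, s i = t i) ∧ (∃ i, s i = u i) ∧ ∃ i, t i = u i := by
  decide

section Bound

variable {E V : Type*} [Fintype E] [DecidableEq V] {v : E → Fin 3 → V} {N : Finset E}
  {T : Finset (Fin 3 → Bool → V)} {k r : ℕ}

open Classical in
/-- Unless `C` spans `r / 2` copies of each of its edges, some edge leaves the tile `C`. -/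
lemma card_isTileEdge_lt (hreg : ∀ i x, (Finset.univ.filter fun f => v f i = x).card = r)
    {C : Fin 3 → Bool → V} (hC : ∀ i, C i false ≠ C i true)
    (hfree : ¬ ∀ s, IsEvenPattern s →
      2 * (Finset.univ.filter fun f => ∀ i, v f i = C i (s i)).card = r) :
    (Finset.univ.filter fun f => IsTileEdge v C f).card < 2 * r := by
  by_contra! hle
  apply hfree
  have hCi : ∀ i, Function.Injective (C i) := by
    intro i b b' h
    have := hC i
    cases b <;> cases b' <;> simp_all
  have hall : ∀ i b f, v f i = C i b → IsTileEdge v C f := by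
    intro i
    have hsub : (Finset.univ.filter fun f => IsTileEdge v C f) ⊆
        (Finset.univ.filter fun f => v f i = C i false) ∪
          Finset.univ.filter fun f => v f i = C i true := by
      intro f hf
      obtain ⟨s, -, hs⟩ := (Finset.mem_filter.1 hf).2
      have := hs i
      cases h : s i <;> simp_all
    have heq := Finset.eq_of_subset_of_card_le hsub (by
      refine (Finset.card_union_le _ _).trans ?_
      rw [hreg, hreg]
      omega)
    intro b f hf
    have : f ∈ (Finset.univ.filter fun f => v f i = C i false) ∪
        Finset.univ.filter fun f => v f i = C i true := by
      cases b <;> simp [hf]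
    rw [← heq] at this
    simpa using this
  have hpair : ∀ s t, IsEvenPattern s → IsEvenPattern t → s ≠ t → (∃ i, s i = t i) →
      (Finset.univ.filter fun f => ∀ i, v f i = C i (s i)).card +
        (Finset.univ.filter fun f => ∀ i, v f i = C i (t i)).card = r := by
    rintro s t hs ht hst ⟨i, hi⟩
    rw [← hreg i (C i (s i)), ← Finset.card_union_of_disjoint]
    · congr 1
      ext f
      simp only [Finset.mem_union, Finset.mem_filter, Finset.mem_univ, true_and]
      refine ⟨fun h => h.elim (fun h => h i) fun h => by rw [h i, hi], fun h => ?_⟩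
      obtain ⟨u, hu, huf⟩ := hall i _ f h
      rcases hs.eq_or_eq ht hu hst hi (hCi i (by rw [← huf i, h])) with
        rfl | rfl
      · exact Or.inl huf
      · exact Or.inr huf
    · refine Finset.disjoint_left.2 fun f hf hf' => hst (funext fun j => ?_)
      simp only [Finset.mem_filter, Finset.mem_univ, true_and] at hf hf'
      exact hCi j (by rw [← hf j, hf' j])
  intro s hs
  obtain ⟨t, u, ht, hu, hst, hsu, htu, h1, h2, h3⟩ := IsEvenPattern.exists_triple s hs
  have := hpair s t hs ht hst h1
  have := hpair s u hs hu hsu h2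
  have := hpair t u ht hu htu h3
  omega

open Classical in
/-- Each edge is paid for by its incidences with the packing. -/
lemma IsPacking.four_le_weight (hP : IsPacking v N T)
    (hmax : ∀ M, IsDisjointFamily v M → M.card ≤ k) (hk : N.card + T.card = k) (f : E) :
    4 + 2 * (if f ∈ N then 1 else 0) + 3 * (if ∃ C ∈ T, IsTileEdge v C f then 1 else 0) ≤
      4 * (if ∃ C ∈ T, IsTileEdge v C f then 1 else 0) +
      2 * (∑ i, if ∃ e ∈ N, v f i = v e i then 1 else 0) +
      (∑ i, if ∃ C ∈ T, ∃ b, v f i = C i b then 1 else 0) +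
      ∑ e ∈ N, ∑ i, if f ∈ links v N T e i then freeCount v N T f else 0 := by
  by_cases hτ : ∃ C ∈ T, IsTileEdge v C f
  · obtain ⟨C, hC, s, hs, hfs⟩ := hτ
    have hfN : f ∉ N := fun h => hP.tile_edge_disj C hC f h 0 (s 0) (hfs 0).symm
    have ht : (∑ i, if ∃ C ∈ T, ∃ b, v f i = C i b then 1 else 0) = 3 := by
      rw [Finset.sum_congr rfl fun i _ => if_pos ⟨C, hC, s i, hfs i⟩]
      simp
    rw [if_neg hfN, if_pos ⟨C, hC, s, hs, hfs⟩, ht]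
    omega
  rw [if_neg hτ]
  by_cases hfN : f ∈ N
  · have hn : (∑ i, if ∃ e ∈ N, v f i = v e i then 1 else 0) = 3 := by
      rw [Finset.sum_congr rfl fun i _ => if_pos ⟨f, hfN, rfl⟩]
      simp
    rw [if_pos hfN, hn]
    omega
  rw [if_neg hfN]
  push Not at hτ
  obtain ⟨i, e, he, hei⟩ := hP.exists_mem_inter hmax hk f hτ
  obtain ⟨j, l, hij, hil, hjl⟩ : ∃ j l : Fin 3, i ≠ j ∧ i ≠ l ∧ j ≠ l := by
    clear hei
    revert i
    decide
  have hn := sum_fin_three_of_ne hij hil hjl fun i => if ∃ e ∈ N, v f i = v e i then 1 else 0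
  have ht := sum_fin_three_of_ne hij hil hjl fun i => if ∃ C ∈ T, ∃ b, v f i = C i b then 1 else 0
  have hi : ∃ e ∈ N, v f i = v e i := ⟨e, he, hei.symm⟩
  simp only [if_pos hi] at hn
  by_cases hj : ∃ e ∈ N, v f j = v e j
  · simp only [if_pos hj] at hn
    omega
  by_cases hl : ∃ e ∈ N, v f l = v e l
  · simp only [if_pos hl] at hn
    omega
  have hfc : freeCount v N T f ≤
      ∑ e ∈ N, ∑ i, if f ∈ links v N T e i then freeCount v N T f else 0 := by
    by_cases h : ∃ a, IsFree v N T a (v f a)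
    · have hmem : f ∈ links v N T e i := by
        refine mem_links.2 ⟨hei.symm, fun a ha e' he' h' => ?_, h⟩
        rcases eq_of_ne_of_ne hij hil hjl a with rfl | rfl | rfl
        · exact ha rfl
        · exact hj ⟨e', he', h'.symm⟩
        · exact hl ⟨e', he', h'.symm⟩
      calc freeCount v N T f = if f ∈ links v N T e i then freeCount v N T f else 0 := by
            rw [if_pos hmem]
        _ ≤ ∑ i, if f ∈ links v N T e i then freeCount v N T f else 0 :=
            Finset.single_le_sum (f := fun i => if f ∈ links v N T e i then freeCount v N T f else 0)
              (fun _ _ => Nat.zero_le _) (Finset.mem_univ i)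
        _ ≤ _ := Finset.single_le_sum
              (f := fun e => ∑ i, if f ∈ links v N T e i then freeCount v N T f else 0)
              (fun _ _ => Nat.zero_le _) he
    · have : freeCount v N T f = 0 := by
        push Not at h
        exact Finset.sum_eq_zero fun i _ => if_neg (h i)
      omega
  have hF := sum_fin_three_of_ne hij hil hjl fun i => if IsFree v N T i (v f i) then 1 else 0
  rw [← freeCount] at hF
  have hcov : ∀ a, (¬ ∃ e ∈ N, v f a = v e a) →
      1 ≤ (if ∃ C ∈ T, ∃ b, v f a = C a b then 1 else 0) +
        if IsFree v N T a (v f a) then 1 else 0 := by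
    intro a ha
    by_cases h : ∃ C ∈ T, ∃ b, v f a = C a b
    · rw [if_pos h]; omega
    · have : IsFree v N T a (v f a) :=
        ⟨fun e he h' => ha ⟨e, he, h'.symm⟩, fun C hC b h' => h ⟨C, hC, b, h'.symm⟩⟩
      rw [if_pos this]; omega
  have h1 := hcov j hj
  have h2 := hcov l hl
  beta_reduce at ht hF
  omega

/-- Summing incidences of edges with a family of vertices in each class. -/
lemma sum_sum_ite_le {ι : Type*} (hreg : ∀ i x, (Finset.univ.filter fun f => v f i = x).card = r)
    (S : Finset ι) (w : ι → Fin 3 → V) (p : E → Fin 3 → Prop) [∀ f i, Decidable (p f i)]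
    (hp : ∀ f i, p f i → ∃ x ∈ S, v f i = w x i) :
    ∑ f, ∑ i, (if p f i then 1 else 0) ≤ 3 * r * S.card := by
  calc ∑ f, ∑ i, (if p f i then 1 else 0)
      ≤ ∑ f, ∑ i, ∑ x ∈ S, (if v f i = w x i then 1 else 0) := by
        refine Finset.sum_le_sum fun f _ => Finset.sum_le_sum fun i _ => ?_
        split_ifs with h
        · obtain ⟨x, hx, hfx⟩ := hp f i h
          calc 1 = if v f i = w x i then 1 else 0 := by rw [if_pos hfx]
            _ ≤ _ := Finset.single_le_sum (f := fun x => if v f i = w x i then 1 else 0)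
              (fun _ _ => Nat.zero_le _) hx
        · exact Nat.zero_le _
    _ = ∑ i, ∑ x ∈ S, ∑ f, (if v f i = w x i then 1 else 0) := by
        rw [Finset.sum_comm]
        exact Finset.sum_congr rfl fun i _ => Finset.sum_comm
    _ = 3 * r * S.card := by
        simp only [← Finset.card_filter, hreg, Finset.sum_const, Finset.card_univ,
          Fintype.card_fin, smul_eq_mul]
        ring

/-- The matching bound for regular 3-partite 3-graphs, with edges indexed by `E` and the vertices
of each class indexed by `V`. -/
theorem four_mul_card_add_le [Fintype V]
    (hreg : ∀ i x, (Finset.univ.filter fun f => v f i = x).card = r)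
    (hfree : ∀ C : Fin 3 → Bool → V, (∀ i, C i false ≠ C i true) → ¬ ∀ s, IsEvenPattern s →
      2 * (Finset.univ.filter fun f => ∀ i, v f i = C i (s i)).card = r)
    (hex : ∃ M, IsDisjointFamily v M ∧ M.card = k)
    (hmax : ∀ M, IsDisjointFamily v M → M.card ≤ k) :
    4 * Fintype.card E + k ≤ 8 * r * k := by
  classical
  obtain ⟨⟨N, T⟩, hNT, hbest⟩ := Finset.exists_max_image
    (Finset.univ.filter fun P : Finset E × Finset (Fin 3 → Bool → V) =>
      IsPacking v P.1 P.2 ∧ P.1.card + P.2.card = k) (fun P => P.2.card) (by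
      obtain ⟨M, hM, hMk⟩ := hex
      exact ⟨(M, ∅), by simpa [hMk] using ⟨hM, by simp, by simp, by simp, by simp⟩⟩)
  obtain ⟨hP, hk⟩ := (Finset.mem_filter.1 hNT).2
  have hTmax : ∀ N' T', IsPacking v N' T' → N'.card + T'.card = k → T'.card ≤ T.card :=
    fun N' T' h h' => hbest (N', T') (Finset.mem_filter.2 ⟨Finset.mem_univ _, h, h'⟩)
  simp only at hP hk
  have hsum := Finset.sum_le_sum fun f (_ : f ∈ Finset.univ) => hP.four_le_weight hmax hk f
  simp only [Finset.sum_add_distrib, ← Finset.mul_sum] at hsum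
  have hτ : ∑ f, (if ∃ C ∈ T, IsTileEdge v C f then 1 else 0) + T.card ≤ 2 * r * T.card := by
    rw [← Finset.card_filter]
    have hsub : (Finset.univ.filter fun f => ∃ C ∈ T, IsTileEdge v C f) ⊆
        T.biUnion fun C => Finset.univ.filter fun f => IsTileEdge v C f := by
      intro f hf
      simpa using hf
    have h1 := (Finset.card_le_card hsub).trans Finset.card_biUnion_le
    have h2 : ∑ C ∈ T, ((Finset.univ.filter fun f => IsTileEdge v C f).card + 1) ≤
        T.card • (2 * r) := by
      refine Finset.sum_le_card_nsmul _ _ _ fun C hC => ?_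
      have hCi := hP.inj C hC
      exact card_isTileEdge_lt hreg hCi (hfree C hCi)
    rw [Finset.sum_add_distrib, Finset.sum_const, smul_eq_mul, smul_eq_mul, mul_one,
      mul_comm T.card (2 * r)] at h2
    omega
  have hN : ∑ f, (if f ∈ N then 1 else 0) = N.card := by simp
  have hn : ∑ f, ∑ i, (if ∃ e ∈ N, v f i = v e i then 1 else 0) ≤ 3 * r * N.card :=
    sum_sum_ite_le hreg N v (fun f i => ∃ e ∈ N, v f i = v e i) fun _ _ h => h
  have ht : ∑ f, ∑ i, (if ∃ C ∈ T, ∃ b, v f i = C i b then 1 else 0) ≤ 6 * r * T.card := by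
    have := sum_sum_ite_le hreg (T ×ˢ (Finset.univ : Finset Bool)) (fun x i => x.1 i x.2)
      (fun f i => ∃ C ∈ T, ∃ b, v f i = C i b)
      fun f i ⟨C, hC, b, h⟩ => ⟨(C, b), by simp [hC], h⟩
    rw [Finset.card_product, Finset.card_univ, Fintype.card_bool] at this
    refine this.trans_eq (by ring)
  have hl : ∑ f, ∑ e ∈ N, ∑ i, (if f ∈ links v N T e i then freeCount v N T f else 0) ≤
      2 * r * N.card := by
    rw [Finset.sum_comm, mul_comm, ← smul_eq_mul]
    refine Finset.sum_le_card_nsmul _ _ _ fun e he => ?_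
    rw [Finset.sum_comm]
    refine le_trans (le_of_eq ?_) (hP.sum_freeCount_le hmax hk hTmax hreg he)
    refine Finset.sum_congr rfl fun i _ => ?_
    rw [← Finset.sum_filter]
    simp
  have hE : ∑ _f : E, 4 = 4 * Fintype.card E := by simp [mul_comm]
  rw [hE, hN] at hsum
  rw [← hk]
  nlinarith

end Bound

section Transfer

variable {α β γ : Type*}

lemma card_filter_coe {δ : Type*} [DecidableEq δ] (H : Multiset δ) (p : δ → Prop)
    [DecidablePred p] : (Finset.univ.filter fun x : H => p x.1).card = (H.filter p).card := by
  conv_rhs => rw [← Multiset.map_univ_coe H, Multiset.filter_map, Multiset.card_map]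
  rfl

/-- The vertices of the edges of `H`, with each class numbered by `Fin n`. -/
def edgeVertex {n : ℕ} (a : α ≃ Fin n) (b : β ≃ Fin n) (c : γ ≃ Fin n) (e : α × β × γ) :
    Fin 3 → Fin n :=
  ![a e.1, b e.2.1, c e.2.2]

lemma forall_edgeVertex_ne_iff {n : ℕ} {a : α ≃ Fin n} {b : β ≃ Fin n} {c : γ ≃ Fin n}
    {e f : α × β × γ} : (∀ i, edgeVertex a b c e i ≠ edgeVertex a b c f i) ↔
      e.1 ≠ f.1 ∧ e.2.1 ≠ f.2.1 ∧ e.2.2 ≠ f.2.2 := by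
  simp [edgeVertex, Fin.forall_fin_succ]

lemma exists_isMatching_card_eq_matchNum [Finite α] [Finite β] [Finite γ]
    (H : Multiset (α × β × γ)) :
    (∃ M, IsMatching H M ∧ M.card = matchNum H) ∧ ∀ M, IsMatching H M → M.card ≤ matchNum H := by
  have := Fintype.ofFinite (α × β × γ)
  have hb : BddAbove {k | ∃ M : Finset (α × β × γ), IsMatching H M ∧ M.card = k} :=
    ⟨Fintype.card (α × β × γ), by rintro _ ⟨M, -, rfl⟩; exact Finset.card_le_univ M⟩
  have hne : {k | ∃ M : Finset (α × β × γ), IsMatching H M ∧ M.card = k}.Nonempty :=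
    ⟨0, ∅, by simp [IsMatching]⟩
  exact ⟨Nat.sSup_mem hne hb, fun M hM => le_csSup hb ⟨M, hM, rfl⟩⟩

variable [DecidableEq α] [DecidableEq β] [DecidableEq γ]

lemma isFanoCopy_of_le_count {H : Multiset (α × β × γ)} {s : ℕ} {x1 y1 : α} {x2 y2 : β}
    {x3 y3 : γ} (h1 : x1 ≠ y1) (h2 : x2 ≠ y2) (h3 : x3 ≠ y3)
    (h : ∀ e ∈ fanoEdges x1 y1 x2 y2 x3 y3, s ≤ H.count e) :
    IsFanoCopy H s x1 y1 x2 y2 x3 y3 := by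
  refine ⟨h1, h2, h3, Multiset.le_iff_count.2 fun e => ?_⟩
  rw [Multiset.count_nsmul]
  by_cases he : e ∈ fanoEdges x1 y1 x2 y2 x3 y3
  · have hd : (fanoEdges x1 y1 x2 y2 x3 y3).Nodup := by
      simp [fanoEdges, h1, h2, h3, h2.symm, h3.symm]
    rw [Multiset.count_eq_one_of_mem hd he, mul_one]
    exact h e he
  · rw [Multiset.count_eq_zero_of_notMem he, mul_zero]
    exact Nat.zero_le _

/-- The matching number of a regular 3-partite 3-graph without a copy of `(r / 2) • F`. -/
theorem four_mul_card_add_matchNum_le {H : Multiset (α × β × γ)} {n r : ℕ}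
    (hreg : IsRegular H r) (a : α ≃ Fin n) (b : β ≃ Fin n) (c : γ ≃ Fin n)
    (hfree : ¬ ∃ (s : ℕ) (x1 y1 : α) (x2 y2 : β) (x3 y3 : γ),
      2 * s = r ∧ IsFanoCopy H s x1 y1 x2 y2 x3 y3) :
    4 * (r * n) + matchNum H ≤ 8 * r * matchNum H := by
  have := Finite.of_equiv _ a.symm
  have := Finite.of_equiv _ b.symm
  have := Finite.of_equiv _ c.symm
  obtain ⟨⟨M, hM, hMk⟩, hmax⟩ := exists_isMatching_card_eq_matchNum H
  have hreg' : ∀ i x, (Finset.univ.filter fun f : H => edgeVertex a b c f.1 i = x).card = r := by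
    intro i x
    rw [card_filter_coe H fun f => edgeVertex a b c f i = x]
    fin_cases i
    · refine (congrArg _ (Multiset.filter_congr fun f _ => ?_)).trans (hreg.1 (a.symm x))
      simp [edgeVertex, a.eq_symm_apply]
    · refine (congrArg _ (Multiset.filter_congr fun f _ => ?_)).trans (hreg.2.1 (b.symm x))
      simp [edgeVertex, b.eq_symm_apply]
    · refine (congrArg _ (Multiset.filter_congr fun f _ => ?_)).trans (hreg.2.2 (c.symm x))
      simp [edgeVertex, c.eq_symm_apply]
  have hcard : Fintype.card H = r * n := by
    rw [← Finset.card_univ, Finset.card_eq_sum_card_fiberwise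
      (f := fun f : H => edgeVertex a b c f.1 0) (t := Finset.univ) (by simp)]
    simp [hreg', mul_comm]
  rw [← hcard]
  refine four_mul_card_add_le (v := fun f : H => edgeVertex a b c f.1) hreg' ?_ ?_ ?_
  · intro C hC hall
    have hcount : ∀ s, IsEvenPattern s →
        2 * H.count (a.symm (C 0 (s 0)), b.symm (C 1 (s 1)), c.symm (C 2 (s 2))) = r := by
      intro s hs
      rw [← hall s hs, card_filter_coe H fun f => ∀ i, edgeVertex a b c f i = C i (s i),
        Multiset.count_eq_card_filter_eq]
      congr 2
      refine Multiset.filter_congr fun f _ => ?_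
      rw [eq_comm]
      simp [Fin.forall_fin_succ, edgeVertex, Prod.ext_iff, a.eq_symm_apply, b.eq_symm_apply,
        c.eq_symm_apply]
    have h0 := hcount ![false, false, false] (by decide)
    have h1 := hcount ![false, true, true] (by decide)
    have h2 := hcount ![true, false, true] (by decide)
    have h3 := hcount ![true, true, false] (by decide)
    refine hfree ⟨_, _, _, _, _, _, _, h0, isFanoCopy_of_le_count
      (x1 := a.symm (C 0 false)) (y1 := a.symm (C 0 true)) (x2 := b.symm (C 1 false))
      (y2 := b.symm (C 1 true)) (x3 := c.symm (C 2 false)) (y3 := c.symm (C 2 true))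
      (by simpa using hC 0) (by simpa using hC 1) (by simpa using hC 2) fun e he => ?_⟩
    simp only [Matrix.cons_val] at h0 h1 h2 h3
    simp only [fanoEdges, Multiset.insert_eq_cons, Multiset.mem_cons, Multiset.mem_singleton] at he
    rcases he with rfl | rfl | rfl | rfl <;> simp only [Matrix.cons_val] <;> omega
  · have hlift : ∀ e : M, ∃ f : H, f.1 = e.1 := fun e =>
      ⟨⟨e.1, 0, Multiset.count_pos.2 (hM.1 e.1 e.2)⟩, rfl⟩
    choose g hg using hlift
    have hinj : Function.Injective g := fun e f h => Subtype.ext (by rw [← hg, ← hg, h])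
    refine ⟨Finset.univ.map ⟨g, hinj⟩, ?_, by simpa using hMk⟩
    intro e he f hf hef
    obtain ⟨e, -, rfl⟩ := Finset.mem_map.1 he
    obtain ⟨f, -, rfl⟩ := Finset.mem_map.1 hf
    refine forall_edgeVertex_ne_iff.2 ?_
    simp only [Function.Embedding.coeFn_mk, hg]
    exact hM.2 e e.2 f f.2 fun h => hef (by rw [Subtype.ext h])
  · intro S hS
    have hinj : Set.InjOn (fun f : H => f.1) S := by
      intro e he f hf hef
      by_contra hne
      exact hS e he f hf hne 0 (congrFun (congrArg (edgeVertex a b c) hef) 0)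
    rw [← Finset.card_image_of_injOn hinj]
    refine hmax _ ⟨fun e he => ?_, fun e he f hf hef => ?_⟩
    · obtain ⟨x, -, rfl⟩ := Finset.mem_image.1 he
      exact Multiset.coe_mem
    · obtain ⟨x, hx, rfl⟩ := Finset.mem_image.1 he
      obtain ⟨y, hy, rfl⟩ := Finset.mem_image.1 hf
      exact forall_edgeVertex_ne_iff.1 (hS x hx y hy fun h => hef (by rw [h]))

end Transfer

/-- If `H` is an `r`-regular 3-partite 3-graph (`r ≥ 2`) with `n` vertices in each class
containing no copy of `(r/2) • F`, then `ν(H) ≥ (1 + 1/(22r − 77/3))·n/2`. -/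
theorem stmt8 {α β γ : Type*} [Fintype α] [Fintype β] [Fintype γ]
    [DecidableEq α] [DecidableEq β] [DecidableEq γ]
    (H : Multiset (α × β × γ)) (n r : ℕ) (hr : 2 ≤ r)
    (hreg : IsRegular H r)
    (hA : Fintype.card α = n) (hB : Fintype.card β = n) (hC : Fintype.card γ = n)
    (hfree : ¬ ∃ (s : ℕ) (x1 y1 : α) (x2 y2 : β) (x3 y3 : γ),
      2 * s = r ∧ IsFanoCopy H s x1 y1 x2 y2 x3 y3) :
    (1 + 1 / (22 * (r : ℝ) - 77 / 3)) * n / 2 ≤ (matchNum H : ℝ) := by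
  have key := four_mul_card_add_matchNum_le hreg (Fintype.equivFinOfCardEq hA)
    (Fintype.equivFinOfCardEq hB) (Fintype.equivFinOfCardEq hC) hfree
  have key' : 4 * ((r : ℝ) * n) + matchNum H ≤ 8 * r * matchNum H := by exact_mod_cast key
  have hr' : (2 : ℝ) ≤ r := by exact_mod_cast hr
  have hn : (0 : ℝ) ≤ n := n.cast_nonneg
  have hq : 0 < 8 * (r : ℝ) - 1 := by linarith
  calc (1 + 1 / (22 * (r : ℝ) - 77 / 3)) * n / 2 ≤ (1 + 1 / (8 * r - 1)) * n / 2 := by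
        have := one_div_le_one_div_of_le hq (by linarith : 8 * (r : ℝ) - 1 ≤ 22 * r - 77 / 3)
        gcongr ?_ / _
        exact mul_le_mul_of_nonneg_right (by linarith) hn
    _ = 4 * (r * n) / (8 * r - 1) := by field_simp; ring
    _ ≤ matchNum H := by rw [div_le_iff₀ hq]; linarith

end Tripartite
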